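/- (Countermodel extraction; left-to-right direction of Theorem 2 in constructive form) If a disjunctive state D₀ is not winning, then there exists a named model M such that You have a winning strategy in the semantic game G(M, g) for every game state g occurring in D₀. -/

import Mathlib

/-- Hybrid logic formulas over nominals `ℕ` and propositional variables `ℕ`
(the two sorts are kept disjoint by the constructors). -/
inductive Form : Type where
  | prop : ℕ → Form
  | nom : ℕ → Form
  | rel : ℕ → ℕ → Form
  | and : Form → Form → Form
  | or : Form → Form → Form
  | imp : Form → Form → Form
  | neg : Form → Form
  | at_ : ℕ → Form → Form
  | box : Form → Form
  | dia : Form → Form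

/-- A model for hybrid logic: a nonempty set of worlds, an accessibility
relation, a valuation and an assignment of nominals to worlds. -/
structure Model where
  W : Type
  ne : Nonempty W
  R : W → W → Prop
  V : ℕ → W → Prop
  g : ℕ → W

/-- Satisfaction of a formula at a world of a model. -/
def sat (M : Model) : M.W → Form → Prop
  | w, .prop p => M.V p w
  | w, .nom i => M.g i = w
  | _, .rel i j => M.R (M.g i) (M.g j)
  | w, .and φ ψ => sat M w φ ∧ sat M w ψ
  | w, .or φ ψ => sat M w φ ∨ sat M w ψ
  | w, .imp φ ψ => ¬ sat M w φ ∨ sat M w ψ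
  | w, .neg φ => ¬ sat M w φ
  | _, .at_ i φ => sat M (M.g i) φ
  | w, .box φ => ∀ v, M.R w v → sat M v φ
  | w, .dia φ => ∃ v, M.R w v ∧ sat M v φ

/-- A model is named iff every world has a name, i.e. the assignment is surjective. -/
def Model.Named (M : Model) : Prop := Function.Surjective M.g

/-- A formula is valid iff it is true at every world of every model. -/
def Valid (φ : Form) : Prop := ∀ (M : Model) (w : M.W), sat M w φ

/-- Roles: `pro` means I am the proponent (`P`), `opp` that I am the opponent (`O`). -/
inductive Role : Type where
  | pro : Role
  | opp : Role

/-- Role switch. -/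
def Role.swap : Role → Role
  | .pro => .opp
  | .opp => .pro

/-- Game states of the semantic game over a named model, with worlds referred to
by their names: `loc r i φ` is `Q, i : φ` and `glob r φ` is `Q : φ`. -/
inductive NState : Type where
  | loc : Role → ℕ → Form → NState
  | glob : Role → Form → NState

/-- Elementary formulas: `p`, `i`, `R(i,j)`. -/
def Form.elem : Form → Prop
  | .prop _ => True
  | .nom _ => True
  | .rel _ _ => True
  | _ => False

/-- Elementary game states: states `Q, i : φ` with `φ` elementary (these are the
leaves of the semantic game over named models). -/
def NState.elem : NState → Prop
  | .loc _ _ φ => φ.elem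
  | .glob _ _ => False

/-- States labelled "I" (where it is My choice); all other non-leaf states are labelled "Y". -/
def NState.myTurn : NState → Prop
  | .loc .pro _ (.or _ _) => True
  | .loc .pro _ (.imp _ _) => True
  | .loc .pro _ (.neg _) => True
  | .loc .pro _ (.at_ _ _) => True
  | .loc .pro _ (.dia _) => True
  | .loc .opp _ (.and _ _) => True
  | .loc .opp _ (.box _) => True
  | .glob .opp _ => True
  | _ => False

/-- The (model-independent) child relation of the semantic game over named models,
using the reformulated rules `(R_□)`, `(R_◇)` and `(R_U)`:
`NChild s t` says that `t` is a child of `s` in the game tree. -/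
inductive NChild : NState → NState → Prop where
  | orL (r i φ ψ) : NChild (.loc r i (.or φ ψ)) (.loc r i φ)
  | orR (r i φ ψ) : NChild (.loc r i (.or φ ψ)) (.loc r i ψ)
  | andL (r i φ ψ) : NChild (.loc r i (.and φ ψ)) (.loc r i φ)
  | andR (r i φ ψ) : NChild (.loc r i (.and φ ψ)) (.loc r i ψ)
  | impL (r i φ ψ) : NChild (.loc r i (.imp φ ψ)) (.loc r.swap i φ)
  | impR (r i φ ψ) : NChild (.loc r i (.imp φ ψ)) (.loc r i ψ)
  | neg (r i φ) : NChild (.loc r i (.neg φ)) (.loc r.swap i φ)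
  | at_ (r i j φ) : NChild (.loc r i (.at_ j φ)) (.loc r j φ)
  | box (r i φ) (j : ℕ) : NChild (.loc r i (.box φ)) (.loc r j (.or (.neg (.rel i j)) φ))
  | dia (r i φ) (j : ℕ) : NChild (.loc r i (.dia φ)) (.loc r j (.and (.rel i j) φ))
  | glob (r φ) (i : ℕ) : NChild (.glob r φ) (.loc r i φ)

/-- The label of an elementary leaf state in the game over the model `M`:
"I" iff the corresponding elementary claim is correct. -/
def elemIWin (M : Model) : NState → Prop
  | .loc .pro i φ => sat M (M.g i) φ
  | .loc .opp i φ => ¬ sat M (M.g i) φ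
  | .glob _ _ => False

/-- I have a winning strategy for the semantic game `G(M, s)` over a named model:
at "I"-nodes I keep one child, at "Y"-nodes all children, and all leaves are labelled "I". -/
inductive IWinsN (M : Model) : NState → Prop where
  | leaf {s} : s.elem → elemIWin M s → IWinsN M s
  | move {s t} : s.myTurn → NChild s t → IWinsN M t → IWinsN M s
  | resp {s} : ¬ s.myTurn → ¬ s.elem → (∀ t, NChild s t → IWinsN M t) → IWinsN M s

/-- You have a winning strategy for the semantic game `G(M, s)` over a named model:
at "Y"-nodes You keep one child, at "I"-nodes all children, and all leaves are labelled "Y". -/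
inductive YWinsN (M : Model) : NState → Prop where
  | leaf {s} : s.elem → ¬ elemIWin M s → YWinsN M s
  | move {s t} : ¬ s.myTurn → NChild s t → YWinsN M t → YWinsN M s
  | resp {s} : s.myTurn → (∀ t, NChild s t → YWinsN M t) → YWinsN M s

/-- A disjunctive state: a finite multiset of game states. -/
abbrev DState : Type := Multiset NState

/-- A disjunctive state is elementary iff all its game states are. -/
def DElem (D : DState) : Prop := ∀ s ∈ D, s.elem

/-- A regulation function maps every non-elementary disjunctive state to one of
its non-elementary game states. -/
def IsRegulation (ρ : DState → NState) : Prop :=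
  ∀ D : DState, ¬ DElem D → ρ D ∈ D ∧ ¬ (ρ D).elem

/-- `D` is game valid: for every named model `M` there is a member of `D` for
which I have a winning strategy in the semantic game over `M`. -/
def GameValid (D : DState) : Prop :=
  ∀ M : Model, M.Named → ∃ s ∈ D, IWinsN M s

/-- I have a winning strategy for the disjunctive game `DG(D, ρ)`.
At the state `g ⋁ D` with `ρ (g ⋁ D) = g`: if `g` is labelled "I", I either move in `g`
or duplicate `g`; if `g` is labelled "Y", You move in `g` and I must win after every move.
An elementary disjunctive state is a leaf labelled "I" (winning for Me) iff for every named
model some member of it is a leaf labelled "I" of the semantic game over that model.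
Since winning strategies are wellfounded trees, infinite plays are not winning for Me. -/
inductive DWins (ρ : DState → NState) : DState → Prop where
  | leaf {D : DState} : DElem D → (∀ M : Model, M.Named → ∃ s ∈ D, IWinsN M s) →
      DWins ρ D
  | movI {D : DState} {g g' : NState} : ρ (g ::ₘ D) = g → g.myTurn → NChild g g' →
      DWins ρ (g' ::ₘ D) → DWins ρ (g ::ₘ D)
  | dup {D : DState} {g : NState} : ρ (g ::ₘ D) = g → g.myTurn →
      DWins ρ (g ::ₘ g ::ₘ D) → DWins ρ (g ::ₘ D)
  | movY {D : DState} {g : NState} : ρ (g ::ₘ D) = g → ¬ g.myTurn → ¬ g.elem →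
      (∀ g', NChild g g' → DWins ρ (g' ::ₘ D)) → DWins ρ (g ::ₘ D)

/-- `D` is winning: there is a regulation `ρ` such that I have a winning strategy
for `DG(D, ρ)`. -/
def Winning (D : DState) : Prop :=
  ∃ ρ : DState → NState, IsRegulation ρ ∧ DWins ρ D

/-- `Form.occurs k φ`: the nominal `k` occurs in the formula `φ`. -/
def Form.occurs (k : ℕ) : Form → Prop
  | .prop _ => False
  | .nom i => i = k
  | .rel i j => i = k ∨ j = k
  | .and φ ψ => φ.occurs k ∨ ψ.occurs k
  | .or φ ψ => φ.occurs k ∨ ψ.occurs k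
  | .imp φ ψ => φ.occurs k ∨ ψ.occurs k
  | .neg φ => φ.occurs k
  | .at_ i φ => i = k ∨ φ.occurs k
  | .box φ => φ.occurs k
  | .dia φ => φ.occurs k

/-- A nominal occurs in a game state iff it occurs as its label or in its formula. -/
def NState.occurs (k : ℕ) : NState → Prop
  | .loc _ i φ => i = k ∨ φ.occurs k
  | .glob _ φ => φ.occurs k

/-- A nominal occurs in a disjunctive state iff it occurs in one of its game states. -/
def DOccurs (k : ℕ) (D : DState) : Prop := ∃ s ∈ D, s.occurs k

def Form.sz : Form → ℕ
  | .prop _ => 1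
  | .nom _ => 1
  | .rel _ _ => 1
  | .and φ ψ => φ.sz + ψ.sz + 1
  | .or φ ψ => φ.sz + ψ.sz + 1
  | .imp φ ψ => φ.sz + ψ.sz + 1
  | .neg φ => φ.sz + 1
  | .at_ _ φ => φ.sz + 1
  | .box φ => φ.sz + 5
  | .dia φ => φ.sz + 5

def NState.sz : NState → ℕ
  | .loc _ _ φ => φ.sz
  | .glob _ φ => φ.sz + 1

theorem NChild.sz_lt {s t : NState} (h : NChild s t) : t.sz < s.sz := by
  cases h <;> simp [NState.sz, Form.sz] <;> omega

theorem NState.myTurn_not_elem {s : NState} (h : s.myTurn) : ¬ s.elem := by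
  rcases s with ⟨r, i, φ⟩ | ⟨r, φ⟩
  · cases r <;> cases φ <;> simp_all [NState.myTurn, NState.elem, Form.elem]
  · simp [NState.elem]

def NState.ch : NState → ℕ → NState
  | .loc r i (.or φ ψ), n => if n = 0 then .loc r i φ else .loc r i ψ
  | .loc r i (.and φ ψ), n => if n = 0 then .loc r i φ else .loc r i ψ
  | .loc r i (.imp φ ψ), n => if n = 0 then .loc r.swap i φ else .loc r i ψ
  | .loc r i (.neg φ), _ => .loc r.swap i φ
  | .loc r _ (.at_ j φ), _ => .loc r j φ
  | .loc r i (.box φ), j => .loc r j (.or (.neg (.rel i j)) φ)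
  | .loc r i (.dia φ), j => .loc r j (.and (.rel i j) φ)
  | .loc r i φ, _ => .loc r i φ
  | .glob r φ, i => .loc r i φ

theorem NState.ch_child {s : NState} (h : ¬ s.elem) (n : ℕ) : NChild s (s.ch n) := by
  rcases s with ⟨r, i, φ⟩ | ⟨r, φ⟩
  · cases φ <;> simp [NState.elem, Form.elem] at h <;> simp only [NState.ch] <;>
      (try split) <;> constructor
  · constructor

theorem NChild.eq_ch {s t : NState} (h : NChild s t) : ∃ n, t = s.ch n := by
  cases h
  case orL => exact ⟨0, rfl⟩
  case andL => exact ⟨0, rfl⟩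
  case impL => exact ⟨0, rfl⟩
  case orR => exact ⟨1, rfl⟩
  case andR => exact ⟨1, rfl⟩
  case impR => exact ⟨1, rfl⟩
  case neg => exact ⟨0, rfl⟩
  case at_ => exact ⟨0, rfl⟩
  case box j => exact ⟨j, rfl⟩
  case dia j => exact ⟨j, rfl⟩
  case glob j => exact ⟨j, rfl⟩

/-- Derivability with free choice of the active state. -/
inductive Der : DState → Prop where
  | leaf {D : DState} : DElem D → GameValid D → Der D
  | movI {D : DState} {g g' : NState} : g.myTurn → NChild g g' → Der (g' ::ₘ D) → Der (g ::ₘ D)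
  | dup {D : DState} {g : NState} : g.myTurn → Der (g ::ₘ g ::ₘ D) → Der (g ::ₘ D)
  | movY {D : DState} {g : NState} : ¬ g.myTurn → ¬ g.elem →
      (∀ g', NChild g g' → Der (g' ::ₘ D)) → Der (g ::ₘ D)

/-- Ranked derivability. -/
inductive DerR : Ordinal.{0} → DState → Prop where
  | leaf {a} {D : DState} : DElem D → GameValid D → DerR a D
  | movI {a b} {D : DState} {g g' : NState} : b < a → g.myTurn → NChild g g' →
      DerR b (g' ::ₘ D) → DerR a (g ::ₘ D)
  | dup {a b} {D : DState} {g : NState} : b < a → g.myTurn →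
      DerR b (g ::ₘ g ::ₘ D) → DerR a (g ::ₘ D)
  | movY {a} {D : DState} {g : NState} (f : NState → Ordinal.{0}) : ¬ g.myTurn → ¬ g.elem →
      (∀ g', f g' < a) →
      (∀ g', NChild g g' → DerR (f g') (g' ::ₘ D)) → DerR a (g ::ₘ D)

theorem Der.ranked {D : DState} (h : Der D) : ∃ a, DerR a D := by
  induction h with
  | leaf h1 h2 => exact ⟨0, .leaf h1 h2⟩
  | movI h1 h2 _ ih =>
    obtain ⟨a, ha⟩ := ih
    exact ⟨_, .movI (Order.lt_succ a) h1 h2 ha⟩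
  | dup h1 _ ih =>
    obtain ⟨a, ha⟩ := ih
    exact ⟨_, .dup (Order.lt_succ a) h1 ha⟩
  | @movY D g h1 h2 _ ih =>
    have : ∀ g', ∃ a, NChild g g' → DerR a (g' ::ₘ D) := by
      intro g'
      by_cases hc : NChild g g'
      · obtain ⟨a, ha⟩ := ih g' hc
        exact ⟨a, fun _ => ha⟩
      · exact ⟨0, fun h => absurd h hc⟩
    choose f hf using this
    exact ⟨Order.succ (⨆ x, f x), .movY f h1 h2
      (fun g' => Order.lt_succ_of_le (Ordinal.le_iSup f g')) hf⟩

noncomputable def rk (D : DState) : Ordinal.{0} := sInf {a | DerR a D}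

theorem rk_le {a} {D : DState} (h : DerR a D) : rk D ≤ a := csInf_le' h

theorem rk_mem {D : DState} (h : ∃ a, DerR a D) : DerR (rk D) D :=
  csInf_mem (s := {a | DerR a D}) h

def Good (D : DState) (g : NState) : Prop :=
  ∃ D', D = g ::ₘ D' ∧ ¬ g.elem ∧
    ((g.myTurn ∧ ∃ g', NChild g g' ∧ (∃ a, DerR a (g' ::ₘ D')) ∧ rk (g' ::ₘ D') < rk D) ∨
     (g.myTurn ∧ (∃ a, DerR a (g ::ₘ g ::ₘ D')) ∧ rk (g ::ₘ g ::ₘ D') < rk D) ∨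
     (¬ g.myTurn ∧ ∀ g', NChild g g' → (∃ a, DerR a (g' ::ₘ D')) ∧ rk (g' ::ₘ D') < rk D))

theorem exists_good {D : DState} (h : ∃ a, DerR a D) :
    (DElem D ∧ GameValid D) ∨ ∃ g, Good D g := by
  have h := rk_mem h
  generalize hr : rk D = r at h
  cases h with
  | leaf h1 h2 => exact Or.inl ⟨h1, h2⟩
  | @movI _ b D' g g' hb h1 h2 h3 =>
    exact Or.inr ⟨g, D', rfl, NState.myTurn_not_elem h1, Or.inl ⟨h1, g', h2, ⟨_, h3⟩,
      hr ▸ (rk_le h3).trans_lt hb⟩⟩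
  | @dup _ b D' g hb h1 h3 =>
    exact Or.inr ⟨g, D', rfl, NState.myTurn_not_elem h1, Or.inr (Or.inl ⟨h1, ⟨_, h3⟩,
      hr ▸ (rk_le h3).trans_lt hb⟩)⟩
  | @movY _ D' g f h1 h2 hb h3 =>
    exact Or.inr ⟨g, D', rfl, h2, Or.inr (Or.inr ⟨h1, fun g' hg' => ⟨⟨_, h3 g' hg'⟩,
      hr ▸ (rk_le (h3 g' hg')).trans_lt (hb g')⟩⟩)⟩

theorem exists_rho : ∃ ρ : DState → NState, IsRegulation ρ ∧
    ∀ D, (∃ g, Good D g) → Good D (ρ D) := by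
  have : ∀ D : DState, ∃ g : NState, (¬ DElem D → g ∈ D ∧ ¬ g.elem) ∧
      ((∃ g, Good D g) → Good D g) := by
    intro D
    by_cases h : ∃ g, Good D g
    · obtain ⟨g, hg⟩ := h
      refine ⟨g, fun _ => ?_, fun _ => hg⟩
      obtain ⟨D', rfl, h2, _⟩ := hg
      exact ⟨Multiset.mem_cons_self _ _, h2⟩
    · by_cases h' : DElem D
      · exact ⟨.glob .pro (.prop 0), fun h => absurd h' h, fun h'' => absurd h'' h⟩
      · have h2 := h'
        unfold DElem at h2
        push Not at h2
        obtain ⟨g, hg, hg2⟩ := h2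
        exact ⟨g, fun _ => ⟨hg, hg2⟩, fun h'' => absurd h'' h⟩
  choose ρ h1 h2 using this
  exact ⟨ρ, h1, h2⟩

theorem Der.winning {D : DState} (h : Der D) : Winning D := by
  obtain ⟨ρ, hρ, hg⟩ := exists_rho
  refine ⟨ρ, hρ, ?_⟩
  have key : ∀ r : Ordinal.{0}, ∀ D : DState, rk D = r → (∃ a, DerR a D) → DWins ρ D := by
    intro r
    induction r using WellFoundedLT.induction with
    | _ r ih =>
      intro D hr hD
      rcases exists_good hD with ⟨h1, h2⟩ | h
      · exact .leaf h1 h2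
      · have hG := hg D h
        generalize hρD : ρ D = g at hG
        obtain ⟨D', rfl, he, hc⟩ := hG
        subst hr
        rcases hc with ⟨h1, g', h2, h3, h4⟩ | ⟨h1, h3, h4⟩ | ⟨h1, h2⟩
        · exact .movI hρD h1 h2 (ih _ h4 _ rfl h3)
        · exact .dup hρD h1 (ih _ h4 _ rfl h3)
        · exact .movY hρD h1 he (fun g' hg' => ih _ (h2 g' hg').2 _ rfl (h2 g' hg').1)
  exact key _ D rfl h.ranked

theorem Der.weak_elem {D : DState} (h : Der D) (s : NState) (hs : s.elem) : Der (s ::ₘ D) := by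
  induction h with
  | leaf h1 h2 =>
    refine .leaf ?_ ?_
    · intro t ht
      rcases Multiset.mem_cons.1 ht with rfl | ht
      · exact hs
      · exact h1 t ht
    · intro M hM
      obtain ⟨t, ht, hw⟩ := h2 M hM
      exact ⟨t, Multiset.mem_cons_of_mem ht, hw⟩
  | movI h1 h2 _ ih =>
    rw [Multiset.cons_swap] at ih ⊢
    exact .movI h1 h2 ih
  | dup h1 _ ih =>
    rw [Multiset.cons_swap, Multiset.cons_swap s] at ih
    rw [Multiset.cons_swap]
    exact .dup h1 ih
  | movY h1 h2 _ ih =>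
    rw [Multiset.cons_swap]
    refine .movY h1 h2 (fun g' hg' => ?_)
    rw [Multiset.cons_swap]
    exact ih g' hg'

theorem Der.weak {D : DState} (h : Der D) : ∀ (n : ℕ) (s : NState), s.sz = n → Der (s ::ₘ D) := by
  intro n
  induction n using Nat.strong_induction_on with
  | _ n ih =>
    rintro s rfl
    by_cases he : s.elem
    · exact h.weak_elem s he
    by_cases hm : s.myTurn
    · have hc := NState.ch_child he 0
      exact .movI hm hc (ih _ hc.sz_lt _ rfl)
    · exact .movY hm he (fun g' hc => ih _ hc.sz_lt _ rfl)

theorem Der.weak_add {D : DState} (h : Der D) (E : DState) : Der (E + D) := by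
  induction E using Multiset.induction_on with
  | empty => simpa using h
  | cons s E ih =>
    rw [Multiset.cons_add]
    exact ih.weak _ s rfl

/-- An underivable state has a named model falsifying all its elementary members. -/
theorem elem_model {D : DState} (h : ¬ Der D) :
    ∃ M : Model, ∀ s ∈ D, s.elem → ¬ elemIWin M s := by
  classical
  by_contra hcon
  push Not at hcon
  apply h
  have h1 : Der (D.filter (fun s => s.elem)) := by
    refine .leaf (fun s hs => (Multiset.mem_filter.1 hs).2) (fun M _ => ?_)
    obtain ⟨s, hs, he, hw⟩ := hcon M
    exact ⟨s, Multiset.mem_filter.2 ⟨hs, he⟩, .leaf he hw⟩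
  have h2 := h1.weak_add (D.filter (fun s => ¬ s.elem))
  rwa [add_comm, Multiset.filter_add_not] at h2

def StepP (n : ℕ) (L L' : DState) : Prop :=
  ∀ s ∈ L, (s.elem → s ∈ L') ∧ (s.myTurn → s ∈ L' ∧ ∀ k ≤ n, s.ch k ∈ L') ∧
    (¬ s.elem → ¬ s.myTurn → ∃ t, NChild s t ∧ t ∈ L')

theorem add_children {s : NState} (hm : s.myTurn) {C : DState} (h : ¬ Der (s ::ₘ C)) (n : ℕ) :
    ∃ E : DState, ¬ Der (E + (s ::ₘ C)) ∧ ∀ k < n, s.ch k ∈ E := by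
  induction n with
  | zero => exact ⟨0, by simpa using h, by simp⟩
  | succ n ih =>
    obtain ⟨E, h1, h2⟩ := ih
    refine ⟨s.ch n ::ₘ E, fun hd => h1 ?_, ?_⟩
    · rw [Multiset.add_cons]
      refine .dup hm (.movI hm (NState.ch_child (NState.myTurn_not_elem hm) n) ?_)
      rwa [Multiset.cons_add, Multiset.add_cons] at hd
    · intro k hk
      rcases Nat.lt_succ_iff_lt_or_eq.1 hk with hk | rfl
      · exact Multiset.mem_cons_of_mem (h2 k hk)
      · exact Multiset.mem_cons_self _ _

theorem StepP.mono {n : ℕ} {L L' L'' : DState} (h : StepP n L L') (hs : L' ≤ L'') :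
    StepP n L L'' := by
  intro s hsL
  obtain ⟨h1, h2, h3⟩ := h s hsL
  have hm : ∀ x, x ∈ L' → x ∈ L'' := fun x hx => Multiset.mem_of_le hs hx
  refine ⟨fun h => hm _ (h1 h), fun h => ⟨hm _ (h2 h).1, fun k hk => hm _ ((h2 h).2 k hk)⟩,
    fun a b => ?_⟩
  obtain ⟨t, ht, ht'⟩ := h3 a b
  exact ⟨t, ht, hm _ ht'⟩

theorem step_aux (n : ℕ) (L : DState) : ∀ C : DState, ¬ Der (L + C) →
    ∃ L', ¬ Der (L' + C) ∧ StepP n L L' := by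
  induction L using Multiset.induction_on with
  | empty => intro C h; exact ⟨0, h, by simp [StepP]⟩
  | cons s L ih =>
    intro C h
    rw [Multiset.cons_add, ← Multiset.add_cons] at h
    obtain ⟨L', h1, h2⟩ := ih _ h
    by_cases he : s.elem
    · refine ⟨s ::ₘ L', by rwa [Multiset.cons_add, ← Multiset.add_cons], ?_⟩
      intro t ht
      rcases Multiset.mem_cons.1 ht with rfl | ht
      · exact ⟨fun _ => Multiset.mem_cons_self _ _,
          fun hm => absurd he (NState.myTurn_not_elem hm), fun h => absurd he h⟩
      · exact (h2.mono (Multiset.le_cons_self _ _)) t ht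
    by_cases hm : s.myTurn
    · rw [Multiset.add_cons] at h1
      obtain ⟨E, h3, h4⟩ := add_children hm h1 (n + 1)
      refine ⟨E + (s ::ₘ L'), by rwa [add_assoc, Multiset.cons_add], ?_⟩
      intro t ht
      rcases Multiset.mem_cons.1 ht with rfl | ht
      · refine ⟨fun h => absurd h he, fun _ => ⟨?_, fun k hk => ?_⟩, fun _ h => absurd hm h⟩
        · simp
        · exact Multiset.mem_add.2 (Or.inl (h4 k (by omega)))
      · exact (h2.mono ((Multiset.le_cons_self _ _).trans (Multiset.le_add_left _ _))) t ht
    · rw [Multiset.add_cons] at h1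
      have : ∃ t, NChild s t ∧ ¬ Der (t ::ₘ (L' + C)) := by
        by_contra hcon
        push Not at hcon
        exact h1 (.movY hm he hcon)
      obtain ⟨t, htc, htd⟩ := this
      refine ⟨t ::ₘ L', by rwa [Multiset.cons_add], ?_⟩
      intro u hu
      rcases Multiset.mem_cons.1 hu with rfl | hu
      · exact ⟨fun h => absurd h he, fun h => absurd h hm,
          fun _ _ => ⟨t, htc, Multiset.mem_cons_self _ _⟩⟩
      · exact (h2.mono (Multiset.le_cons_self _ _)) u hu

theorem step (n : ℕ) (L : {L : DState // ¬ Der L}) :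
    ∃ L' : {L : DState // ¬ Der L}, StepP n L.1 L'.1 := by
  obtain ⟨L', h1, h2⟩ := step_aux n L.1 0 (by simpa using L.2)
  exact ⟨⟨L', by simpa using h1⟩, h2⟩

theorem exists_seq {D : DState} (h : ¬ Der D) :
    ∃ S : ℕ → DState, S 0 = D ∧ (∀ n, ¬ Der (S n)) ∧ ∀ n, StepP n (S n) (S (n + 1)) := by
  choose f hf using step
  let S : ℕ → {L : DState // ¬ Der L} := fun n => Nat.rec ⟨D, h⟩ (fun n L => f n L) n
  exact ⟨fun n => (S n).1, rfl, fun n => (S n).2, fun n => hf n (S n)⟩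

/-- The limit of a sequence of models along an ultrafilter, built on nominals. -/
def limSetoid (U : Ultrafilter ℕ) (M : ℕ → Model) : Setoid ℕ where
  r i j := ∀ᶠ n in (U : Filter ℕ), (M n).g i = (M n).g j
  iseqv := ⟨fun _ => Filter.Eventually.of_forall fun _ => rfl,
    fun h => h.mono fun _ h => h.symm,
    fun h1 h2 => by filter_upwards [h1, h2] with n a b using a.trans b⟩

def limModel (U : Ultrafilter ℕ) (M : ℕ → Model) : Model where
  W := Quotient (limSetoid U M)
  ne := ⟨Quotient.mk _ 0⟩
  R := fun a b => ∃ i j, Quotient.mk _ i = a ∧ Quotient.mk _ j = b ∧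
    ∀ᶠ n in (U : Filter ℕ), (M n).R ((M n).g i) ((M n).g j)
  V := fun p a => ∃ i, Quotient.mk _ i = a ∧ ∀ᶠ n in (U : Filter ℕ), (M n).V p ((M n).g i)
  g := fun i => Quotient.mk _ i

theorem lim_sat (U : Ultrafilter ℕ) (M : ℕ → Model) (i : ℕ) (φ : Form) (hφ : φ.elem) :
    sat (limModel U M) ((limModel U M).g i) φ ↔
      ∀ᶠ n in (U : Filter ℕ), sat (M n) ((M n).g i) φ := by
  have hq : ∀ {i j : ℕ}, (Quotient.mk (limSetoid U M) i = Quotient.mk (limSetoid U M) j) →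
      ∀ᶠ n in (U : Filter ℕ), (M n).g i = (M n).g j := fun h => Quotient.exact h
  cases φ <;> simp only [Form.elem] at hφ
  case prop p =>
    constructor
    · rintro ⟨j, h1, h2⟩
      filter_upwards [hq h1, h2] with n a b
      simp only [sat]
      rwa [← a]
    · intro h
      exact ⟨i, rfl, h⟩
  case nom j =>
    constructor
    · intro h
      exact hq h
    · intro h
      exact Quotient.sound h
  case rel j k =>
    constructor
    · rintro ⟨j', k', h1, h2, h3⟩
      filter_upwards [hq h1, hq h2, h3] with n a b c
      simp only [sat]
      rwa [← a, ← b]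
    · intro h
      exact ⟨j, k, rfl, rfl, h⟩

theorem lim_elem (U : Ultrafilter ℕ) (M : ℕ → Model) (s : NState) (hs : s.elem)
    (h : ∀ᶠ n in (U : Filter ℕ), ¬ elemIWin (M n) s) : ¬ elemIWin (limModel U M) s := by
  rcases s with ⟨r, i, φ⟩ | ⟨r, φ⟩
  · cases r
    · simp only [elemIWin] at h ⊢
      rw [lim_sat U M i φ hs]
      exact Ultrafilter.eventually_not.1 h
    · simp only [elemIWin, not_not] at h ⊢
      rw [lim_sat U M i φ hs]
      exact h
  · simp [elemIWin]

/-- (Countermodel extraction) If a disjunctive state `D₀` is not winning, then there is a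
named model `M` such that You have a winning strategy in the semantic game `G(M, g)` for
every game state `g` occurring in `D₀`. -/
theorem countermodel_of_not_winning (D₀ : DState) (h : ¬ Winning D₀) :
    ∃ M : Model, M.Named ∧ ∀ s ∈ D₀, YWinsN M s := by
  have hD : ¬ Der D₀ := fun hd => h hd.winning
  obtain ⟨S, h0, hS, hstep⟩ := exists_seq hD
  choose M hM using fun n => elem_model (hS n)
  let U : Ultrafilter ℕ := Filter.hyperfilter ℕ
  refine ⟨limModel U M, fun w => Quotient.exists_rep w, ?_⟩
  have key : ∀ (k : ℕ) (s : NState), s.sz = k → ∀ n, s ∈ S n → YWinsN (limModel U M) s := by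
    intro k
    induction k using Nat.strong_induction_on with
    | _ k ih =>
      rintro s rfl n hn
      by_cases he : s.elem
      · refine .leaf he (lim_elem U M s he ?_)
        have hmem : ∀ m, n ≤ m → s ∈ S m := by
          intro m hm
          induction m, hm using Nat.le_induction with
          | base => exact hn
          | succ m _ ihm => exact (hstep m s ihm).1 he
        have : ∀ᶠ m in Filter.atTop, ¬ elemIWin (M m) s :=
          (Filter.eventually_ge_atTop n).mono fun m hm => hM m s (hmem m hm) he
        exact Nat.hyperfilter_le_atTop this
      by_cases hm : s.myTurn
      · have hmem : ∀ m, n ≤ m → s ∈ S m := by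
          intro m hm'
          induction m, hm' using Nat.le_induction with
          | base => exact hn
          | succ m _ ihm => exact ((hstep m s ihm).2.1 hm).1
        refine .resp hm fun t ht => ?_
        obtain ⟨j, rfl⟩ := ht.eq_ch
        exact ih _ ht.sz_lt _ rfl (max n j + 1)
          (((hstep _ s (hmem _ (le_max_left n j))).2.1 hm).2 j (le_max_right n j))
      · obtain ⟨t, ht, ht'⟩ := (hstep n s hn).2.2 he hm
        exact .move hm ht (ih _ ht.sz_lt _ rfl _ ht')
  intro s hs
  exact key _ s rfl 0 (h0 ▸ hs)
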